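/- arXiv:2201.01402 — 2 statements merged into one kernel-verified Lean document; each statement's English description precedes it below -/
import Mathlib

section
/- Integral representation of the hook Schur multiple zeta value: for integers k₂,…,k_r ≥ 1 with k_r ≥ 2, Σ over a ≤ b₂ ≤ ⋯ ≤ b_r, a < c (positive integers) of 1/(a · ∏_{j=2}^r b_j^{k_j} · c²) equals the iterated integral ∫_0^1 (dz₁/z₁) ∫_0^{z₁} (dz₂/(1−z₂)) ∫_0^{z₂} (dz₃/(1−z₃)) Σ_{b₂ ≤ ⋯ ≤ b_r} (1 − z₃^{b₂})/(b₂^{k₂} ⋯ b_r^{k_r}). -/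
open MeasureTheory

/-!
Put `a = i + 1` and `c = i + m + 2`. The condition `a < c` becomes `m ≥ 0`, and `1 / (a * c ^ 2)`
is the integral of the monomial `x⁻¹ * y ^ m * z ^ i` over the simplex `0 < z < y < x < 1`. Summing
this monomial over `m` and over `i < b₂` gives two geometric series, hence the kernel
`x⁻¹ * (1 - y)⁻¹ * (1 - z)⁻¹ * (1 - z ^ b₂)`. Sum and integral may be interchanged because both the
star series `∑ ∏ b_j ^ (-k_j)` and the series `∑ 1 / (a * c ^ 2)` converge; the latter is itself a
star series, with exponents `(1, 2)`.
-/

section StarSeries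

theorem summable_pi_prod_of_nonneg {ι : Type*} [Fintype ι] {κ : ι → Type*} {f : ∀ i, κ i → ℝ}
    (hf₀ : ∀ i j, 0 ≤ f i j) (hf : ∀ i, Summable (f i)) :
    Summable fun b : ∀ i, κ i => ∏ i, f i (b i) := by
  classical
  refine summable_of_sum_le (c := ∏ i, ∑' j, f i j)
    (fun b => Finset.prod_nonneg fun i _ => hf₀ i (b i)) fun T => ?_
  let box (i : ι) : Finset (κ i) := T.image fun b => b i
  have hT : T ⊆ Fintype.piFinset box := fun b hb =>
    Fintype.mem_piFinset.2 fun i => Finset.mem_image_of_mem (fun b => b i) hb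
  calc ∑ b ∈ T, ∏ i, f i (b i)
      ≤ ∑ b ∈ Fintype.piFinset box, ∏ i, f i (b i) :=
        Finset.sum_le_sum_of_subset_of_nonneg hT fun b _ _ =>
          Finset.prod_nonneg fun i _ => hf₀ i (b i)
    _ = ∏ i, ∑ j ∈ box i, f i j := (Finset.prod_univ_sum box f).symm
    _ ≤ ∏ i, ∑' j, f i j :=
        Finset.prod_le_prod (fun i _ => Finset.sum_nonneg fun j _ => hf₀ i j)
          fun i _ => (hf i).sum_le_tsum (box i) fun j _ => hf₀ i j

variable {ι : Type*} [Fintype ι] {l : ι}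

theorem prod_rpow_div_card_le {x t : ι → ℝ} (hx : ∀ j, 1 ≤ x j) (hxl : ∀ j, x j ≤ x l)
    (ht : ∀ j, 0 ≤ t j) :
    ∏ j, x j ^ (t l / Fintype.card ι) ≤ ∏ j, x j ^ t j := by
  have hx₀ (j : ι) : 0 ≤ x j := zero_le_one.trans (hx j)
  have hcard : (Fintype.card ι : ℝ) ≠ 0 := by exact_mod_cast (Fintype.card_pos_iff.2 ⟨l⟩).ne'
  calc ∏ j, x j ^ (t l / Fintype.card ι)
      ≤ ∏ _j : ι, x l ^ (t l / Fintype.card ι) :=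
        Finset.prod_le_prod (fun j _ => Real.rpow_nonneg (hx₀ j) _) fun j _ =>
          Real.rpow_le_rpow (hx₀ j) (hxl j) (div_nonneg (ht l) (Nat.cast_nonneg _))
    _ = x l ^ t l := by
        rw [Finset.prod_const, Finset.card_univ, ← Real.rpow_mul_natCast (hx₀ l),
          div_mul_cancel₀ _ hcard]
    _ = ∏ j ∈ {l}, x j ^ t j :=
        (Finset.prod_singleton (fun j => x j ^ t j) l).symm
    _ ≤ ∏ j, x j ^ t j :=
        Finset.prod_mono_set_of_one_le (f := fun j => x j ^ t j)
          (fun j => Real.one_le_rpow (hx j) (ht j)) (Finset.subset_univ {l})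

/-- The excess `k l - 1` of the exponent at the largest entry is spread evenly over all entries,
which reduces to a product of convergent one-variable series. -/
theorem summable_prod_rpow_inv_of_le {k : ι → ℝ} (hk : ∀ j, 1 ≤ k j) (hkl : 1 < k l) :
    Summable fun b : {b : ι → ℕ // ∀ j, 0 < b j ∧ b j ≤ b l} =>
      (∏ j, (b.1 j : ℝ) ^ k j)⁻¹ := by
  set ε : ℝ := (k l - 1) / Fintype.card ι
  have hε : 0 < ε :=
    div_pos (sub_pos.2 hkl) (by exact_mod_cast Fintype.card_pos_iff.2 ⟨l⟩)
  have hbox : Summable fun b : ι → ℕ => ∏ j, ((b j : ℝ) ^ (1 + ε))⁻¹ :=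
    summable_pi_prod_of_nonneg (f := fun _ (m : ℕ) => ((m : ℝ) ^ (1 + ε))⁻¹)
      (fun _ m => by positivity) fun _ => Real.summable_nat_rpow_inv.2 (lt_add_of_pos_right 1 hε)
  have hsub := hbox.subtype {b | ∀ j, 0 < b j ∧ b j ≤ b l}
  refine hsub.of_nonneg_of_le (fun b => by positivity) ?_
  rintro ⟨b, hb⟩
  have hb₁ (j : ι) : (1 : ℝ) ≤ b j := by exact_mod_cast (hb j).1
  have hbl (j : ι) : (b j : ℝ) ≤ b l := by exact_mod_cast (hb j).2
  have hb₀ (j : ι) : (0 : ℝ) < b j := zero_lt_one.trans_le (hb₁ j)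
  have hsplit (s : ι → ℝ) :
      ∏ j, (b j : ℝ) ^ (1 + s j) = (∏ j, (b j : ℝ)) * ∏ j, (b j : ℝ) ^ s j := by
    simp only [Real.rpow_add (hb₀ _), Real.rpow_one, Finset.prod_mul_distrib]
  have hle : ∏ j, (b j : ℝ) ^ (1 + ε) ≤ ∏ j, (b j : ℝ) ^ (1 + (k j - 1)) := by
    rw [hsplit, hsplit]
    refine mul_le_mul_of_nonneg_left ?_ (Finset.prod_nonneg fun j _ => (hb₀ j).le)
    exact prod_rpow_div_card_le hb₁ hbl fun j => sub_nonneg.2 (hk j)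
  simp only [add_sub_cancel] at hle
  simp only [Function.comp_apply, Finset.prod_inv_distrib]
  exact inv_anti₀ (Finset.prod_pos fun j _ => Real.rpow_pos_of_pos (hb₀ j) _) hle

theorem summable_monotone_prod_pow_inv [Preorder ι] {o : ι} (ho : IsBot o) (hl : IsTop l)
    {k : ι → ℕ} (hk : ∀ j, 1 ≤ k j) (hkl : 2 ≤ k l) :
    Summable fun b : {b : ι → ℕ // Monotone b ∧ 0 < b o} => (∏ j, (b.1 j : ℝ) ^ k j)⁻¹ := by
  have hstar := summable_prod_rpow_inv_of_le (k := fun j => (k j : ℝ)) (l := l)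
    (fun j => by exact_mod_cast hk j) (by exact_mod_cast hkl)
  simp only [Real.rpow_natCast] at hstar
  have hstar_of_monotone (b : ι → ℕ) (hb : Monotone b ∧ 0 < b o) (j : ι) : 0 < b j ∧ b j ≤ b l :=
    ⟨hb.2.trans_le (hb.1 (ho j)), hb.1 (hl j)⟩
  have hincl := (Subtype.impEmbedding _ _ hstar_of_monotone).injective
  exact (hstar.comp_injective hincl).congr fun _ => rfl

theorem summable_corner_leg_inv :
    Summable fun p : ℕ × ℕ => ((p.1 + 1 : ℝ) * (p.1 + p.2 + 2) ^ 2)⁻¹ := by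
  have hstar := summable_prod_rpow_inv_of_le (l := (1 : Fin 2)) (k := ![1, 2])
    (by simp [Fin.forall_fin_two]) (by simp)
  let pair (p : ℕ × ℕ) : {b : Fin 2 → ℕ // ∀ j, 0 < b j ∧ b j ≤ b 1} :=
    ⟨![p.1 + 1, p.1 + p.2 + 2], by
      simp only [Fin.forall_fin_two, Matrix.cons_val_zero, Matrix.cons_val_one]
      omega⟩
  have hpair : Function.Injective pair := fun p q h => by
    have hcorner : p.1 + 1 = q.1 + 1 := congrFun (congrArg Subtype.val h) 0
    have hleg : p.1 + p.2 + 2 = q.1 + q.2 + 2 := congrFun (congrArg Subtype.val h) 1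
    ext <;> omega
  refine (hstar.comp_injective hpair).congr fun p => ?_
  simp [pair, Fin.prod_univ_two]

theorem summable_sigma_corner_leg_inv_mul_of_nonneg {β : Type*} (N : β → ℕ) {g : β → ℝ}
    (hg₀ : 0 ≤ g) (hg : Summable g) :
    Summable fun s : Σ b, Fin (N b) × ℕ =>
      ((s.2.1 + 1 : ℝ) * (s.2.1 + s.2.2 + 2) ^ 2)⁻¹ * g s.1 := by
  let reorder (s : Σ b, Fin (N b) × ℕ) : (ℕ × ℕ) × β := ((s.2.1, s.2.2), s.1)
  have hreorder : Function.Injective reorder := by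
    rintro ⟨b, i, m⟩ ⟨b', i', m'⟩ h
    obtain ⟨⟨hi, rfl⟩, rfl⟩ : ((i : ℕ) = i' ∧ m = m') ∧ b = b' := by simpa [reorder] using h
    rw [Fin.ext hi]
  have hprod : Summable fun q : (ℕ × ℕ) × β =>
      ((q.1.1 + 1 : ℝ) * (q.1.1 + q.1.2 + 2) ^ 2)⁻¹ * g q.2 :=
    Summable.mul_of_nonneg (g := g) summable_corner_leg_inv hg (fun p => by positivity) hg₀
  exact (hprod.comp_injective hreorder).congr fun _ => rfl

end StarSeries

section Simplex

theorem setLIntegral_prod_of_fibers {α β : Type*} [MeasurableSpace α] [MeasurableSpace β]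
    {μ : Measure α} {ν : Measure β} [SFinite ν] {A : Set α} {B : α → Set β} (hA : MeasurableSet A)
    (hAB : MeasurableSet {p : α × β | p.1 ∈ A ∧ p.2 ∈ B p.1}) {f : α × β → ENNReal}
    (hf : Measurable f) :
    ∫⁻ p in {p : α × β | p.1 ∈ A ∧ p.2 ∈ B p.1}, f p ∂μ.prod ν =
      ∫⁻ x in A, ∫⁻ y in B x, f (x, y) ∂ν ∂μ := by
  rw [← lintegral_indicator hAB, lintegral_prod _ (hf.indicator hAB).aemeasurable,
    ← lintegral_indicator hA]
  refine lintegral_congr fun x => ?_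
  by_cases hx : x ∈ A
  · have hB : MeasurableSet (B x) := by simpa [hx] using measurable_prodMk_left (x := x) hAB
    rw [Set.indicator_of_mem hx, ← lintegral_indicator hB]
    refine lintegral_congr fun y => ?_
    by_cases hy : y ∈ B x <;> simp [hx, hy]
  · simp [hx]

/-- The domain `1 > z₁ > z₂ > z₃ > 0` of the iterated integral
`∫₀¹ dz₁ ∫₀^{z₁} dz₂ ∫₀^{z₂} dz₃`. -/
def descendingSimplex : Set (ℝ × ℝ × ℝ) :=
  {z | 0 < z.2.2 ∧ z.2.2 < z.2.1 ∧ z.2.1 < z.1 ∧ z.1 < 1}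

theorem measurableSet_descendingSimplex : MeasurableSet descendingSimplex := by
  unfold descendingSimplex
  measurability

theorem setLIntegral_descendingSimplex {f : ℝ × ℝ × ℝ → ENNReal} (hf : Measurable f) :
    ∫⁻ z in descendingSimplex, f z =
      ∫⁻ x in Set.Ioo 0 1, ∫⁻ y in Set.Ioo 0 x, ∫⁻ z in Set.Ioo 0 y, f (x, y, z) := by
  let triangle (x : ℝ) : Set (ℝ × ℝ) := {p | p.1 ∈ Set.Ioo 0 x ∧ p.2 ∈ Set.Ioo 0 p.1}
  have htriangle (x : ℝ) : MeasurableSet (triangle x) := by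
    simp only [triangle, Set.mem_Ioo]
    measurability
  have hfibers : descendingSimplex = {z | z.1 ∈ Set.Ioo 0 1 ∧ z.2 ∈ triangle z.1} := by
    ext ⟨x, y, z⟩
    simp only [descendingSimplex, triangle, Set.mem_ofPred_eq, Set.mem_Ioo]
    exact ⟨fun ⟨hz, hzy, hyx, hx⟩ =>
        ⟨⟨hz.trans (hzy.trans hyx), hx⟩, ⟨hz.trans hzy, hyx⟩, hz, hzy⟩,
      fun ⟨⟨_, hx⟩, ⟨_, hyx⟩, hz, hzy⟩ => ⟨hz, hzy, hyx, hx⟩⟩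
  rw [hfibers, Measure.volume_eq_prod, setLIntegral_prod_of_fibers measurableSet_Ioo
    (hfibers ▸ measurableSet_descendingSimplex) hf]
  refine lintegral_congr fun x => ?_
  exact setLIntegral_prod_of_fibers measurableSet_Ioo (htriangle x)
    (hf.comp measurable_prodMk_left)

theorem setLIntegral_Ioo_zero_const_mul_pow {c t : ℝ} (hc : 0 ≤ c) (ht : 0 ≤ t) (n : ℕ) :
    ∫⁻ x in Set.Ioo 0 t, ENNReal.ofReal (c * x ^ n) =
      ENNReal.ofReal (c * (t ^ (n + 1) / (n + 1))) := by
  rw [← ofReal_integral_eq_lintegral_ofReal, ← integral_Ioc_eq_integral_Ioo,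
    ← intervalIntegral.integral_of_le ht, intervalIntegral.integral_const_mul, integral_pow]
  · simp
  · exact (by fun_prop : Continuous fun x : ℝ => c * x ^ n).integrableOn_Icc.mono_set
      Set.Ioo_subset_Icc_self
  · filter_upwards [ae_restrict_mem measurableSet_Ioo] with x hx
    exact mul_nonneg hc (pow_nonneg hx.1.le n)

theorem setLIntegral_descendingSimplex_monomial (i m : ℕ) :
    ∫⁻ z in descendingSimplex, ENNReal.ofReal (z.1⁻¹ * z.2.1 ^ m * z.2.2 ^ i) =
      ENNReal.ofReal ((i + 1 : ℝ) * (i + m + 2) ^ 2)⁻¹ := by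
  rw [setLIntegral_descendingSimplex (by fun_prop)]
  have hz {x y : ℝ} (hx : 0 < x) (hy : 0 < y) :
      ∫⁻ z in Set.Ioo 0 y, ENNReal.ofReal (x⁻¹ * y ^ m * z ^ i) =
        ENNReal.ofReal ((x⁻¹ / (i + 1)) * y ^ (i + m + 1)) := by
    rw [setLIntegral_Ioo_zero_const_mul_pow (by positivity) hy.le]
    ring_nf
  have hy {x : ℝ} (hx : 0 < x) :
      ∫⁻ y in Set.Ioo 0 x, ∫⁻ z in Set.Ioo 0 y, ENNReal.ofReal (x⁻¹ * y ^ m * z ^ i) =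
        ENNReal.ofReal (((i + 1 : ℝ) * (i + m + 2))⁻¹ * x ^ (i + m + 1)) := by
    rw [setLIntegral_congr_fun measurableSet_Ioo fun y hy => hz hx hy.1,
      setLIntegral_Ioo_zero_const_mul_pow (by positivity) hx.le]
    congr 1
    push_cast
    field_simp
    ring
  rw [setLIntegral_congr_fun measurableSet_Ioo fun x hx => hy hx.1,
    setLIntegral_Ioo_zero_const_mul_pow (by positivity) zero_le_one]
  congr 1
  push_cast
  field_simp
  ring

theorem monomial_nonneg_of_mem_descendingSimplex {z : ℝ × ℝ × ℝ} (hz : z ∈ descendingSimplex)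
    (i m : ℕ) : 0 ≤ z.1⁻¹ * z.2.1 ^ m * z.2.2 ^ i := by
  obtain ⟨hz₃, h₃₂, h₂₁, -⟩ := hz
  have hz₂ := hz₃.trans h₃₂
  have hz₁ := hz₂.trans h₂₁
  positivity

theorem ae_monomial_nonneg (i m : ℕ) :
    0 ≤ᵐ[volume.restrict descendingSimplex] fun z => z.1⁻¹ * z.2.1 ^ m * z.2.2 ^ i := by
  filter_upwards [ae_restrict_mem measurableSet_descendingSimplex] with z hz
  exact monomial_nonneg_of_mem_descendingSimplex hz i m

theorem integrableOn_descendingSimplex_monomial (i m : ℕ) :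
    IntegrableOn (fun z => z.1⁻¹ * z.2.1 ^ m * z.2.2 ^ i) descendingSimplex := by
  refine (lintegral_ofReal_ne_top_iff_integrable ?_ (ae_monomial_nonneg i m)).1 ?_
  · exact Measurable.aestronglyMeasurable (by fun_prop)
  · rw [setLIntegral_descendingSimplex_monomial]
    exact ENNReal.ofReal_ne_top

theorem setIntegral_descendingSimplex_monomial (i m : ℕ) :
    ∫ z in descendingSimplex, z.1⁻¹ * z.2.1 ^ m * z.2.2 ^ i =
      ((i + 1 : ℝ) * (i + m + 2) ^ 2)⁻¹ := by
  rw [integral_eq_lintegral_of_nonneg_ae (ae_monomial_nonneg i m)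
    (Measurable.aestronglyMeasurable (by fun_prop)), setLIntegral_descendingSimplex_monomial,
    ENNReal.toReal_ofReal (by positivity)]

end Simplex

theorem hasSum_pow_mul_pow_fin_prod {𝕜 : Type*} [NormedField 𝕜] [CompleteSpace 𝕜] {y z : 𝕜}
    (hy : ‖y‖ < 1) (hz : z ≠ 1) (N : ℕ) :
    HasSum (fun p : Fin N × ℕ => z ^ (p.1 : ℕ) * y ^ p.2)
      ((1 - z)⁻¹ * (1 - z ^ N) * (1 - y)⁻¹) := by
  have hsum : ∑ i : Fin N, z ^ (i : ℕ) = (1 - z)⁻¹ * (1 - z ^ N) := by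
    rw [Fin.sum_univ_eq_sum_range (fun i => z ^ i), geom_sum_eq hz, ← neg_div_neg_eq, neg_sub,
      neg_sub, div_eq_inv_mul]
  have hsummable : Summable fun p : Fin N × ℕ => z ^ (p.1 : ℕ) * y ^ p.2 :=
    summable_mul_of_summable_norm (f := fun i : Fin N => z ^ (i : ℕ)) .of_finite
      (summable_norm_geometric_of_norm_lt_one hy)
  rw [← hsum]
  have hprod := (hasSum_fintype fun i : Fin N => z ^ (i : ℕ)).mul
    (hasSum_geometric_of_norm_lt_one hy) hsummable
  exact hprod

section WeightedHook

variable {β E : Type*} [NormedAddCommGroup E] [NormedSpace ℝ E]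

theorem hasSum_monomial_smul {z : ℝ × ℝ × ℝ} (hz : z ∈ descendingSimplex) (N : ℕ) (v : E) :
    HasSum (fun p : Fin N × ℕ => (z.1⁻¹ * z.2.1 ^ p.2 * z.2.2 ^ (p.1 : ℕ)) • v)
      ((z.1⁻¹ * (1 - z.2.1)⁻¹ * (1 - z.2.2)⁻¹) • (1 - z.2.2 ^ N) • v) := by
  obtain ⟨hz₃, h₃₂, h₂₁, h₁⟩ := hz
  have hz₂ : ‖z.2.1‖ < 1 := by
    rw [Real.norm_of_nonneg (hz₃.trans h₃₂).le]
    exact h₂₁.trans h₁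
  have hz₃_ne : z.2.2 ≠ 1 := (h₃₂.trans (h₂₁.trans h₁)).ne
  rw [smul_smul]
  convert ((hasSum_pow_mul_pow_fin_prod hz₂ hz₃_ne N).mul_left z.1⁻¹).smul_const v using 2
  · ring_nf
  · ring_nf

theorem summable_one_sub_pow_smul {t : ℝ} (ht₀ : 0 ≤ t) (ht₁ : t ≤ 1) (N : β → ℕ) {w : β → E}
    (hw : Summable fun b => ‖w b‖) : Summable fun b => ‖(1 - t ^ N b) • w b‖ := by
  refine hw.of_nonneg_of_le (fun b => norm_nonneg _) fun b => ?_
  rw [norm_smul, Real.norm_of_nonneg (sub_nonneg.2 (pow_le_one₀ ht₀ ht₁))]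
  exact mul_le_of_le_one_left (norm_nonneg _) (sub_le_self _ (pow_nonneg ht₀ _))

variable (N : β → ℕ) {w : β → E}

theorem hasSum_sigma_monomial_smul [CompleteSpace E] {z : ℝ × ℝ × ℝ} (hz : z ∈ descendingSimplex)
    (hw : Summable fun b => ‖w b‖) :
    HasSum (fun s : Σ b, Fin (N b) × ℕ =>
        (z.1⁻¹ * z.2.1 ^ s.2.2 * z.2.2 ^ (s.2.1 : ℕ)) • w s.1)
      ((z.1⁻¹ * (1 - z.2.1)⁻¹ * (1 - z.2.2)⁻¹) • ∑' b, (1 - z.2.2 ^ N b) • w b) := by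
  have hz₀ : 0 ≤ z.2.2 := hz.1.le
  have hz₁ : z.2.2 ≤ 1 := (hz.2.1.trans (hz.2.2.1.trans hz.2.2.2)).le
  have hbase := (summable_one_sub_pow_smul hz₀ hz₁ N hw).of_norm.hasSum.const_smul
    (z.1⁻¹ * (1 - z.2.1)⁻¹ * (1 - z.2.2)⁻¹)
  refine hbase.sigma_of_hasSum (fun b => hasSum_monomial_smul hz (N b) (w b))
    (Summable.of_norm ?_)
  have hfiber (b : β) : HasSum
      (fun p : Fin (N b) × ℕ => ‖(z.1⁻¹ * z.2.1 ^ p.2 * z.2.2 ^ (p.1 : ℕ)) • w b‖)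
      ((z.1⁻¹ * (1 - z.2.1)⁻¹ * (1 - z.2.2)⁻¹) • (1 - z.2.2 ^ N b) • ‖w b‖) := by
    simpa only [norm_smul, Real.norm_of_nonneg (monomial_nonneg_of_mem_descendingSimplex hz _ _),
      smul_eq_mul] using hasSum_monomial_smul hz (N b) ‖w b‖
  refine (summable_sigma_of_nonneg fun s => norm_nonneg _).2 ⟨fun b => (hfiber b).summable, ?_⟩
  simp only [(hfiber _).tsum_eq]
  have hbase_norm := summable_one_sub_pow_smul hz₀ hz₁ N (w := fun b => ‖w b‖)
    (by simpa only [norm_norm] using hw)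
  exact hbase_norm.of_norm.const_smul (z.1⁻¹ * (1 - z.2.1)⁻¹ * (1 - z.2.2)⁻¹)

theorem hasSum_sigma_corner_leg_inv_smul [Countable β] [CompleteSpace E]
    (hw : Summable fun b => ‖w b‖) :
    HasSum (fun s : Σ b, Fin (N b) × ℕ =>
        ((s.2.1 + 1 : ℝ) * (s.2.1 + s.2.2 + 2) ^ 2)⁻¹ • w s.1)
      (∫ z in descendingSimplex, (z.1⁻¹ * (1 - z.2.1)⁻¹ * (1 - z.2.2)⁻¹) •
        ∑' b, (1 - z.2.2 ^ N b) • w b) := by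
  let F (s : Σ b, Fin (N b) × ℕ) (z : ℝ × ℝ × ℝ) : E :=
    (z.1⁻¹ * z.2.1 ^ s.2.2 * z.2.2 ^ (s.2.1 : ℕ)) • w s.1
  have hF_int (s) : IntegrableOn (F s) descendingSimplex :=
    (integrableOn_descendingSimplex_monomial s.2.1 s.2.2).smul_const (w s.1)
  have hF_integral (s) : ∫ z in descendingSimplex, F s z =
      ((s.2.1 + 1 : ℝ) * (s.2.1 + s.2.2 + 2) ^ 2)⁻¹ • w s.1 := by
    simp only [F, integral_smul_const, setIntegral_descendingSimplex_monomial]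
  have hF_norm (s) : ∫ z in descendingSimplex, ‖F s z‖ =
      ((s.2.1 + 1 : ℝ) * (s.2.1 + s.2.2 + 2) ^ 2)⁻¹ * ‖w s.1‖ := by
    rw [← setIntegral_descendingSimplex_monomial, ← integral_mul_const]
    refine setIntegral_congr_fun measurableSet_descendingSimplex fun z hz => ?_
    simp only [F, norm_smul, Real.norm_of_nonneg (monomial_nonneg_of_mem_descendingSimplex hz _ _)]
  have hF_tsum : ∫ z in descendingSimplex, ∑' s, F s z =
      ∫ z in descendingSimplex, (z.1⁻¹ * (1 - z.2.1)⁻¹ * (1 - z.2.2)⁻¹) •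
        ∑' b, (1 - z.2.2 ^ N b) • w b :=
    setIntegral_congr_fun measurableSet_descendingSimplex fun z hz =>
      (hasSum_sigma_monomial_smul N hz hw).tsum_eq
  simpa only [hF_integral, hF_tsum] using hasSum_integral_of_summable_integral_norm hF_int
    (by simpa only [hF_norm] using
      summable_sigma_corner_leg_inv_mul_of_nonneg N (fun b => norm_nonneg (w b)) hw)

end WeightedHook

/-- Parametrises the corner `a` and the leg `c`, where `a < c` and `a ≤ N b`, by `a = i + 1` with
`i < N b` and `c = a + m + 1`. -/
def cornerLegEquiv {β : Type*} (N : β → ℕ) : (Σ b, Fin (N b) × ℕ) ≃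
    {x : (ℕ × ℕ) × β // 0 < x.1.1 ∧ x.1.1 < x.1.2 ∧ x.1.1 ≤ N x.2} where
  toFun s := ⟨((s.2.1 + 1, s.2.1 + s.2.2 + 2), s.1), by dsimp only; omega⟩
  invFun x := ⟨x.1.2, ⟨x.1.1.1 - 1, by have := x.2; omega⟩, x.1.1.2 - x.1.1.1 - 1⟩
  left_inv := by
    rintro ⟨b, i, m⟩
    simp only [Nat.add_sub_cancel, Fin.eta, Sigma.mk.injEq, heq_eq_eq, Prod.mk.injEq, true_and]
    omega
  right_inv := by
    rintro ⟨⟨⟨a, c⟩, b⟩, h⟩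
    dsimp only at h
    simp only [Subtype.mk.injEq, Prod.mk.injEq, and_true]
    omega

/-- Splits a filling of the hook into its corner and leg `(a, c)` and the rest `b` of its first row,
which bounds the corner only through its first entry. -/
def hookFillingEquiv {ι : Type*} [Preorder ι] {o : ι} (ho : IsBot o) :
    {x : (ℕ × ℕ) × (ι → ℕ) //
      0 < x.1.1 ∧ x.1.1 < x.1.2 ∧ Monotone x.2 ∧ ∀ j, x.1.1 ≤ x.2 j} ≃
    {x : (ℕ × ℕ) × {b : ι → ℕ // Monotone b ∧ 0 < b o} //
      0 < x.1.1 ∧ x.1.1 < x.1.2 ∧ x.1.1 ≤ x.2.1 o} where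
  toFun x := ⟨(x.1.1, ⟨x.1.2, x.2.2.2.1, x.2.1.trans_le (x.2.2.2.2 o)⟩),
    x.2.1, x.2.2.1, x.2.2.2.2 o⟩
  invFun x := ⟨(x.1.1, x.1.2.1), x.2.1, x.2.2.1, x.1.2.2.1, fun j =>
    x.2.2.2.trans (x.1.2.2.1 (ho j))⟩

theorem integral_representation_hook_general {β E : Type*} [Countable β] [NormedAddCommGroup E]
    [NormedSpace ℝ E] [CompleteSpace E] (N : β → ℕ) {w : β → E} (hw : Summable fun b => ‖w b‖) :
    HasSum (fun x : {x : (ℕ × ℕ) × β // 0 < x.1.1 ∧ x.1.1 < x.1.2 ∧ x.1.1 ≤ N x.2} =>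
        ((x.1.1.1 : ℝ) * (x.1.1.2 : ℝ) ^ 2)⁻¹ • w x.1.2)
      (∫ z in descendingSimplex, (z.1⁻¹ * (1 - z.2.1)⁻¹ * (1 - z.2.2)⁻¹) •
        ∑' b, (1 - z.2.2 ^ N b) • w b) := by
  rw [← (cornerLegEquiv N).hasSum_iff]
  convert hasSum_sigma_corner_leg_inv_smul N hw using 4
  simp [cornerLegEquiv]

/-- Integral representation of the hook Schur multiple zeta value:
for `k₂,…,k_r ≥ 1`, `k_r ≥ 2`,
`Σ_{a ≤ b₂ ≤ ⋯ ≤ b_r, a < c} 1/(a ∏ b_j^{k_j} c²)` equals the iterated integral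
`∫₀¹ dz₁/z₁ ∫₀^{z₁} dz₂/(1−z₂) ∫₀^{z₂} dz₃/(1−z₃) Σ_{b₂ ≤ ⋯ ≤ b_r} (1 − z₃^{b₂})/∏ b_j^{k_j}`. -/
theorem integral_representation_hook (n : ℕ) (hn : 0 < n) (k : Fin n → ℕ)
    (hk : ∀ j, 1 ≤ k j) (hlast : 2 ≤ k ⟨n - 1, by omega⟩) :
    (∑' x : {x : (ℕ × ℕ) × (Fin n → ℕ) //
        0 < x.1.1 ∧ x.1.1 < x.1.2 ∧ Monotone x.2 ∧ ∀ j, x.1.1 ≤ x.2 j},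
      ((x.1.1.1 : ℝ) * (∏ j, ((x.1.2 j : ℝ)) ^ (k j)) * (x.1.1.2 : ℝ) ^ 2)⁻¹) =
    ∫ z in {z : ℝ × ℝ × ℝ | 0 < z.2.2 ∧ z.2.2 < z.2.1 ∧ z.2.1 < z.1 ∧ z.1 < 1},
      (z.1)⁻¹ * (1 - z.2.1)⁻¹ * (1 - z.2.2)⁻¹ *
        ∑' b : {b : Fin n → ℕ // Monotone b ∧ 0 < b ⟨0, hn⟩},
          (1 - z.2.2 ^ ((b : Fin n → ℕ) ⟨0, hn⟩)) * (∏ j, (((b : Fin n → ℕ) j : ℝ)) ^ (k j))⁻¹ := by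
  have hbot : IsBot (⟨0, hn⟩ : Fin n) := fun j => Fin.mk_le_of_le_val (Nat.zero_le j)
  have htop : IsTop (⟨n - 1, by omega⟩ : Fin n) := fun j => Fin.le_def.2 (Nat.le_sub_one_of_lt j.2)
  have hstar := (summable_monotone_prod_pow_inv hbot htop hk hlast).norm
  refine Eq.trans ?_ (integral_representation_hook_general (fun b => b.1 ⟨0, hn⟩) hstar).tsum_eq
  rw [← (hookFillingEquiv hbot).tsum_eq]
  refine tsum_congr fun x => ?_
  simp only [hookFillingEquiv, Equiv.coe_fn_mk, smul_eq_mul, mul_inv, mul_right_comm]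
end

section
/- Every elementary factorial Schur multiple zeta value ζ_{λ,s}(𝐬,𝐭) of hook shape λ = (λ₁,1^{k-1}) with positive integer exponents (corner and final-chain exponents ≥ 2 for convergence) is a ℚ-linear combination (indeed a ℤ-linear combination) of multiple zeta values ζ(k₁,…,k_r) of Euler–Zagier type of the same weight. -/
/-- General multiple zeta value `ζ(k₁,…,k_r)` for `k : Fin r → ℕ`. -/
noncomputable def mzv {r : ℕ} (k : Fin r → ℕ) : ℝ :=
  ∑' n : {n : Fin r → ℕ // StrictMono n ∧ ∀ i, 0 < n i},
    (∏ i, (((n : Fin r → ℕ) i : ℝ)) ^ (k i))⁻¹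

/-- Elementary factorial Schur MZV of hook shape `(r', 1^{r-1})` (row extras indexed by
`Fin n`, column by `Fin r`) with chain length `s`:
`Σ_{m₁<⋯<m_s, column v₁<⋯<v_r, row v₁ ≤ b_j (weakly increasing)}`
`∏ m_i^{-t_i} ∏ b_j^{-kr_j} ∏ (m_s + v_i)^{-kc_i}`. -/
noncomputable def efHook (s n r : ℕ) (hs : 0 < s) (hr : 0 < r)
    (t : Fin s → ℕ) (kr : Fin n → ℕ) (kc : Fin r → ℕ) : ℝ :=
  ∑' x : {x : (Fin s → ℕ) × (Fin r → ℕ) × (Fin n → ℕ) //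
      StrictMono x.1 ∧ (∀ i, 0 < x.1 i) ∧ StrictMono x.2.1 ∧ 0 < x.2.1 ⟨0, hr⟩
        ∧ Monotone x.2.2 ∧ ∀ j, x.2.1 ⟨0, hr⟩ ≤ x.2.2 j},
    (∏ i, ((x.1.1 i : ℝ)) ^ (t i))⁻¹ * (∏ j, ((x.1.2.2 j : ℝ)) ^ (kr j))⁻¹
      * (∏ i, (((x.1.1 ⟨s - 1, by omega⟩ + x.1.2.1 i : ℕ) : ℝ)) ^ (kc i))⁻¹

/- All sums are computed in `[0, ∞]`, where they may be rearranged freely; convergence is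
established only for the final expressions. A multiple zeta value is the value at `1` of a power
series obtained from `1` by alternately multiplying by `X / (1 - X)` and inverting the Euler
operator `X d/dX`. The cones spanned by such series are closed under products (shuffle product):
the Leibniz rule for `X d/dX` is the partial fraction expansion of `1/(mn)`. Substituting
`n = m_s + v` turns the shifted column of the hook into a product of power series as well, the chain
`m` giving one factor and the corner `v₁ = v` the other. The row is not a polylogarithm in `v`,
but the sum over `b₁ ≥ v` is the sum over all `b₁`, which is a constant, minus the sum over
`b₁ < v`, in which `b₁` is the corner of a shorter row. -/

open scoped ENNReal NNReal PowerSeries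

section EulerOperator

/-- The reciprocal of a natural number in `[0, ∞]`, with `recip 0 = 0` in contrast to
`(0 : ℝ≥0∞)⁻¹ = ∞`. -/
noncomputable def recip (n : ℕ) : ℝ≥0∞ := ((n : ℝ≥0)⁻¹ : ℝ≥0)

@[simp]
theorem recip_zero : recip 0 = 0 := by simp [recip]

theorem recip_pow_ne_top (k n : ℕ) : recip n ^ k ≠ ⊤ := ENNReal.pow_ne_top ENNReal.coe_ne_top

theorem toReal_recip_pow (k n : ℕ) : (recip n ^ k).toReal = ((n : ℝ) ^ k)⁻¹ := by
  simp [recip, ENNReal.toReal_pow]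

theorem recip_mul_recip {m n : ℕ} (hm : m ≠ 0) (hn : n ≠ 0) :
    recip m * recip n = recip (m + n) * (recip m + recip n) := by
  have h : (m : ℝ≥0)⁻¹ * (n : ℝ≥0)⁻¹
      = ((m + n : ℕ) : ℝ≥0)⁻¹ * ((m : ℝ≥0)⁻¹ + (n : ℝ≥0)⁻¹) := by
    push_cast
    field_simp
    ring
  simp only [recip]
  exact_mod_cast h

/-- The inverse of the Euler operator `X d/dX`, that is `F ↦ ∫ F dX / X`, which kills the constant
coefficient. -/
noncomputable def eulerInv : Module.End ℝ≥0∞ ℝ≥0∞⟦X⟧ where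
  toFun F := PowerSeries.mk fun n => recip n * PowerSeries.coeff n F
  map_add' F G := by ext n; simp [mul_add]
  map_smul' c F := by ext n; simp [mul_left_comm]

theorem coeff_eulerInv (n : ℕ) (F : ℝ≥0∞⟦X⟧) :
    PowerSeries.coeff n (eulerInv F) = recip n * PowerSeries.coeff n F := by
  simp [eulerInv]

theorem coeff_eulerInv_pow (k n : ℕ) (F : ℝ≥0∞⟦X⟧) :
    PowerSeries.coeff n ((eulerInv ^ k) F) = recip n ^ k * PowerSeries.coeff n F := by
  induction k with
  | zero => simp
  | succ k ih => rw [pow_succ', Module.End.mul_apply, coeff_eulerInv, ih, pow_succ', mul_assoc]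

theorem constantCoeff_eulerInv (F : ℝ≥0∞⟦X⟧) : PowerSeries.constantCoeff (eulerInv F) = 0 := by
  rw [← PowerSeries.coeff_zero_eq_constantCoeff_apply, coeff_eulerInv, recip_zero, zero_mul]

theorem eulerInv_one : eulerInv 1 = 0 := by
  ext n
  rcases eq_or_ne n 0 with rfl | hn <;> simp [coeff_eulerInv, PowerSeries.coeff_one, *]

/-- The Leibniz rule for `X d/dX`, or the partial fraction `1/(mn) = (1/m + 1/n)/(m + n)`. -/
theorem eulerInv_mul_eulerInv {F G : ℝ≥0∞⟦X⟧} (hF : PowerSeries.constantCoeff F = 0)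
    (hG : PowerSeries.constantCoeff G = 0) :
    eulerInv F * eulerInv G = eulerInv (F * eulerInv G + eulerInv F * G) := by
  ext n
  simp only [coeff_eulerInv, map_add, PowerSeries.coeff_mul, ← Finset.sum_add_distrib,
    Finset.mul_sum]
  refine Finset.sum_congr rfl fun ⟨i, j⟩ hij => ?_
  obtain rfl : i + j = n := Finset.HasAntidiagonal.mem_antidiagonal.mp hij
  rcases eq_or_ne i 0 with rfl | hi
  · simp [hF]
  rcases eq_or_ne j 0 with rfl | hj
  · simp [hG]
  rw [mul_mul_mul_comm, recip_mul_recip hi hj]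
  ring

end EulerOperator

section PolylogSpan

/-- The series `X / (1 - X)`; multiplication by it turns coefficients into partial sums
`∑ j < n, F_j`. -/
noncomputable def strictKernel : ℝ≥0∞⟦X⟧ := PowerSeries.mk fun n => if n = 0 then 0 else 1

theorem constantCoeff_strictKernel : PowerSeries.constantCoeff strictKernel = 0 := by
  simp [strictKernel, ← PowerSeries.coeff_zero_eq_constantCoeff_apply,
    -PowerSeries.coeff_zero_eq_constantCoeff]

/-- The series `1 / (1 - X)`; multiplication by it turns coefficients into partial sums
`∑ j ≤ n, F_j`. -/
noncomputable def weakKernel : ℝ≥0∞⟦X⟧ := PowerSeries.mk 1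

theorem weakKernel_eq : weakKernel = 1 + strictKernel := by
  ext n
  rcases eq_or_ne n 0 with rfl | hn <;> simp [weakKernel, strictKernel, PowerSeries.coeff_one, *]

/-- The cone generated by the multiple polylogarithms of weight `W`, built up by iterated
integration against `dX / X` and `dX / (1 - X)`. -/
noncomputable def polylogSpan : ℕ → AddSubmonoid ℝ≥0∞⟦X⟧
  | 0 => AddSubmonoid.closure {1}
  | W + 1 => (polylogSpan W).map eulerInv ⊔
      (polylogSpan W).map (eulerInv ∘ₗ LinearMap.mulLeft ℝ≥0∞ strictKernel)

/-- The cone generated by the multiple polylogarithms of weight `W` that converge at `1`: those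
whose outermost integration is against `dX / X`. The series `1` of weight `0`, which would be the
empty multiple zeta value, is left out. -/
noncomputable def convergentSpan : ℕ → AddSubmonoid ℝ≥0∞⟦X⟧
  | 0 => ⊥
  | W + 1 => (polylogSpan W).map eulerInv

theorem one_mem_polylogSpan : (1 : ℝ≥0∞⟦X⟧) ∈ polylogSpan 0 :=
  AddSubmonoid.subset_closure rfl

theorem mem_polylogSpan_succ {W : ℕ} {F : ℝ≥0∞⟦X⟧} :
    F ∈ polylogSpan (W + 1) ↔ ∃ F₀ ∈ polylogSpan W, ∃ F₁ ∈ polylogSpan W,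
      F = eulerInv F₀ + eulerInv (strictKernel * F₁) := by
  simp [polylogSpan, AddSubmonoid.mem_sup, eq_comm]

theorem eulerInv_mem_convergentSpan {W : ℕ} {F : ℝ≥0∞⟦X⟧} (hF : F ∈ polylogSpan W) :
    eulerInv F ∈ convergentSpan (W + 1) :=
  AddSubmonoid.mem_map_of_mem _ hF

theorem convergentSpan_le_polylogSpan (W : ℕ) : convergentSpan W ≤ polylogSpan W := by
  cases W with
  | zero => exact bot_le
  | succ W => exact le_sup_left

theorem eulerInv_mem_polylogSpan {W : ℕ} {F : ℝ≥0∞⟦X⟧} (hF : F ∈ polylogSpan W) :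
    eulerInv F ∈ polylogSpan (W + 1) :=
  convergentSpan_le_polylogSpan _ (eulerInv_mem_convergentSpan hF)

theorem eulerInv_strictKernel_mul_mem {W : ℕ} {F : ℝ≥0∞⟦X⟧} (hF : F ∈ polylogSpan W) :
    eulerInv (strictKernel * F) ∈ polylogSpan (W + 1) :=
  mem_polylogSpan_succ.mpr ⟨0, zero_mem _, F, hF, by simp⟩

theorem eulerInv_weakKernel_mul_mem {W : ℕ} {F : ℝ≥0∞⟦X⟧} (hF : F ∈ polylogSpan W) :
    eulerInv (weakKernel * F) ∈ polylogSpan (W + 1) :=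
  mem_polylogSpan_succ.mpr ⟨F, hF, F, hF, by rw [weakKernel_eq, add_mul, one_mul, map_add]⟩

theorem eulerInv_pow_mem {W : ℕ} {F : ℝ≥0∞⟦X⟧} (hF : F ∈ polylogSpan W) (k : ℕ) :
    (eulerInv ^ k) F ∈ polylogSpan (W + k) := by
  induction k with
  | zero => exact hF
  | succ k ih =>
    rw [pow_succ']
    exact eulerInv_mem_polylogSpan ih

/-- The Leibniz rule needs vanishing constant coefficients, and `eulerInv` does not see them. -/
theorem exists_constantCoeff_eq_zero {W : ℕ} {F : ℝ≥0∞⟦X⟧} (hF : F ∈ polylogSpan W) :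
    ∃ F' ∈ polylogSpan W, PowerSeries.constantCoeff F' = 0 ∧ eulerInv F' = eulerInv F := by
  cases W with
  | zero =>
    obtain ⟨n, rfl⟩ := AddSubmonoid.mem_closure_singleton.mp hF
    exact ⟨0, zero_mem _, map_zero _, by rw [map_zero, map_nsmul, eulerInv_one, smul_zero]⟩
  | succ W =>
    obtain ⟨F₀, -, F₁, -, rfl⟩ := mem_polylogSpan_succ.mp hF
    exact ⟨_, hF, by simp [constantCoeff_eulerInv], rfl⟩

theorem exists_eq_eulerInv_of_mem_polylogSpan_succ {W : ℕ} {F : ℝ≥0∞⟦X⟧}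
    (hF : F ∈ polylogSpan (W + 1)) :
    ∃ F₀ ∈ polylogSpan W, ∃ F₁ ∈ polylogSpan W,
      PowerSeries.constantCoeff F₀ = 0 ∧ F = eulerInv (F₀ + strictKernel * F₁) := by
  obtain ⟨F₀, hF₀, F₁, hF₁, rfl⟩ := mem_polylogSpan_succ.mp hF
  obtain ⟨F₀', hF₀', hconst, heq⟩ := exists_constantCoeff_eq_zero hF₀
  exact ⟨F₀', hF₀', F₁, hF₁, hconst, by rw [map_add, heq]⟩

/-- The shuffle product. -/
theorem mul_mem_polylogSpan {V W : ℕ} {F G : ℝ≥0∞⟦X⟧} (hF : F ∈ polylogSpan V)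
    (hG : G ∈ polylogSpan W) : F * G ∈ polylogSpan (V + W) := by
  induction V generalizing W F G with
  | zero =>
    obtain ⟨n, rfl⟩ := AddSubmonoid.mem_closure_singleton.mp hF
    simpa only [zero_add, smul_mul_assoc, one_mul] using nsmul_mem hG n
  | succ V ihV =>
  induction W generalizing F G with
  | zero =>
    obtain ⟨n, rfl⟩ := AddSubmonoid.mem_closure_singleton.mp hG
    simpa only [add_zero, mul_smul_comm, mul_one] using nsmul_mem hF n
  | succ W ihW =>
    have eulerInv_mul_mem {A₀ A₁ B : ℝ≥0∞⟦X⟧} (h₀ : A₀ * B ∈ polylogSpan (V + 1 + W))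
        (h₁ : A₁ * B ∈ polylogSpan (V + 1 + W)) :
        eulerInv ((A₀ + strictKernel * A₁) * B) ∈ polylogSpan (V + 1 + (W + 1)) :=
      mem_polylogSpan_succ.mpr ⟨_, h₀, _, h₁, by rw [add_mul, mul_assoc, map_add]⟩
    obtain ⟨F₀, hF₀, F₁, hF₁, hF₀_const, hF_eq⟩ := exists_eq_eulerInv_of_mem_polylogSpan_succ hF
    obtain ⟨G₀, hG₀, G₁, hG₁, hG₀_const, hG_eq⟩ := exists_eq_eulerInv_of_mem_polylogSpan_succ hG
    have leibniz : F * G = eulerInv ((F₀ + strictKernel * F₁) * G)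
        + eulerInv ((G₀ + strictKernel * G₁) * F) := by
      rw [hF_eq, hG_eq, eulerInv_mul_eulerInv (by simp [hF₀_const, constantCoeff_strictKernel])
        (by simp [hG₀_const, constantCoeff_strictKernel]), map_add, mul_comm (eulerInv _) (G₀ + _)]
    rw [leibniz]
    refine add_mem (eulerInv_mul_mem ?_ ?_) (eulerInv_mul_mem ?_ ?_)
    · rw [add_right_comm, add_assoc]; exact ihV hF₀ hG
    · rw [add_right_comm, add_assoc]; exact ihV hF₁ hG
    · rw [mul_comm]; exact ihW hF hG₀
    · rw [mul_comm]; exact ihW hF hG₁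

theorem mul_mem_convergentSpan {V W : ℕ} {F G : ℝ≥0∞⟦X⟧} (hF : F ∈ convergentSpan V)
    (hG : G ∈ convergentSpan W) : F * G ∈ convergentSpan (V + W) := by
  rcases V with _ | V
  · rw [AddSubmonoid.mem_bot.mp hF, zero_mul]; exact zero_mem _
  rcases W with _ | W
  · rw [AddSubmonoid.mem_bot.mp hG, mul_zero]; exact zero_mem _
  obtain ⟨F, hF_mem, rfl⟩ := hF
  obtain ⟨G, hG_mem, rfl⟩ := hG
  obtain ⟨F', hF', hF'_const, hF'_eq⟩ := exists_constantCoeff_eq_zero hF_mem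
  obtain ⟨G', hG', hG'_const, hG'_eq⟩ := exists_constantCoeff_eq_zero hG_mem
  rw [← hF'_eq, ← hG'_eq, eulerInv_mul_eulerInv hF'_const hG'_const]
  refine eulerInv_mem_convergentSpan (W := V + 1 + W) (add_mem ?_ ?_)
  · rw [add_right_comm, add_assoc]
    exact mul_mem_polylogSpan hF' (eulerInv_mem_polylogSpan hG')
  · exact mul_mem_polylogSpan (eulerInv_mem_polylogSpan hF') hG'

end PolylogSpan

section NestedSum

/-- The composite of the operators `F ↦ (eulerInv ^ k) (g * F)` for `k` in `ks`, from left to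
right. On the series `1` it gives the multiple polylogarithm of exponents `ks` for
`g = strictKernel`, and its variant with non-strict inequalities for `g = weakKernel`. -/
noncomputable def nestedSum (g : ℝ≥0∞⟦X⟧) : List ℕ → Module.End ℝ≥0∞ ℝ≥0∞⟦X⟧
  | [] => 1
  | k :: ks => nestedSum g ks * (eulerInv ^ k * LinearMap.mulLeft ℝ≥0∞ g)

theorem nestedSum_nil (g F : ℝ≥0∞⟦X⟧) : nestedSum g [] F = F := rfl

theorem nestedSum_cons (g F : ℝ≥0∞⟦X⟧) (k : ℕ) (ks : List ℕ) :
    nestedSum g (k :: ks) F = nestedSum g ks ((eulerInv ^ k) (g * F)) := rfl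

theorem nestedSum_append_singleton (g F : ℝ≥0∞⟦X⟧) (k : ℕ) (ks : List ℕ) :
    nestedSum g (ks ++ [k]) F = (eulerInv ^ k) (g * nestedSum g ks F) := by
  induction ks generalizing F with
  | nil => rfl
  | cons l ks ih => rw [List.cons_append, nestedSum_cons, ih, nestedSum_cons]

theorem eulerInv_nestedSum_append_singleton (g F : ℝ≥0∞⟦X⟧) (k : ℕ) (ks : List ℕ) :
    eulerInv (nestedSum g (ks ++ [k]) F) = nestedSum g (ks ++ [k + 1]) F := by
  rw [nestedSum_append_singleton, nestedSum_append_singleton, pow_succ', Module.End.mul_apply]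

/-- Exponents, listed by increasing summation index, for which a nested sum converges. The empty
list is allowed. -/
structure IsAdmissible (ks : List ℕ) : Prop where
  one_le : ∀ k ∈ ks, 1 ≤ k
  two_le_getLast : ∀ k ∈ ks.getLast?, 2 ≤ k

theorem IsAdmissible.tail {k : ℕ} {ks : List ℕ} (h : IsAdmissible (k :: ks)) :
    IsAdmissible ks where
  one_le l hl := h.one_le l (List.mem_cons_of_mem k hl)
  two_le_getLast l hl := h.two_le_getLast l (List.mem_getLast?_cons hl)

theorem isAdmissible_ofFn {n : ℕ} {k : Fin n → ℕ} (h_one : ∀ i, 1 ≤ k i)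
    (h_two : ∀ hn : 0 < n, 2 ≤ k ⟨n - 1, by omega⟩) : IsAdmissible (List.ofFn k) where
  one_le := List.forall_mem_ofFn_iff.mpr h_one
  two_le_getLast := by
    rcases n with _ | n
    · simp
    · rw [List.ofFn_succ', List.concat_eq_append, List.getLast?_concat]
      rintro _ ⟨⟩
      exact h_two n.succ_pos

variable {g F : ℝ≥0∞⟦X⟧} {W : ℕ} {ks : List ℕ}

theorem eulerInv_pow_mul_mem
    (hg : ∀ {W F}, F ∈ polylogSpan W → eulerInv (g * F) ∈ polylogSpan (W + 1))
    (hF : F ∈ polylogSpan W) {k : ℕ} (hk : 1 ≤ k) :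
    (eulerInv ^ k) (g * F) ∈ polylogSpan (W + k) := by
  obtain ⟨k, rfl⟩ := Nat.exists_eq_add_of_le' hk
  rw [pow_succ, Module.End.mul_apply, ← add_assoc, add_right_comm]
  exact eulerInv_pow_mem (hg hF) k

theorem nestedSum_mem_polylogSpan
    (hg : ∀ {W F}, F ∈ polylogSpan W → eulerInv (g * F) ∈ polylogSpan (W + 1))
    (hF : F ∈ polylogSpan W) (hks : ∀ k ∈ ks, 1 ≤ k) :
    nestedSum g ks F ∈ polylogSpan (W + ks.sum) := by
  induction ks generalizing W F with
  | nil => exact hF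
  | cons k ks ih =>
    rw [List.forall_mem_cons] at hks
    rw [List.sum_cons, ← add_assoc]
    exact ih (eulerInv_pow_mul_mem hg hF hks.1) hks.2

theorem nestedSum_mem_convergentSpan
    (hg : ∀ {W F}, F ∈ polylogSpan W → eulerInv (g * F) ∈ polylogSpan (W + 1))
    (hF : F ∈ polylogSpan W) (hks : IsAdmissible ks) (hne : ks ≠ []) :
    nestedSum g ks F ∈ convergentSpan (W + ks.sum) := by
  obtain ⟨ks, k, rfl⟩ := ks.eq_nil_or_concat'.resolve_left hne
  obtain ⟨k, rfl⟩ := Nat.exists_eq_add_of_le' (hks.two_le_getLast k (by simp))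
  have inner_mem : nestedSum g (ks ++ [k + 1]) F ∈ polylogSpan (W + ks.sum + (k + 1)) := by
    rw [nestedSum_append_singleton]
    refine eulerInv_pow_mul_mem hg (nestedSum_mem_polylogSpan hg hF fun l hl => ?_) k.succ_pos
    exact hks.one_le l (List.mem_append_left _ hl)
  rw [← eulerInv_nestedSum_append_singleton, List.sum_append, List.sum_singleton, ← add_assoc]
  exact eulerInv_mem_convergentSpan inner_mem

/-- The multiple polylogarithms of weight `W`. -/
def polylogs (W : ℕ) : Set ℝ≥0∞⟦X⟧ :=
  {F | ∃ ks : List ℕ, (∀ k ∈ ks, 1 ≤ k) ∧ ks.sum = W ∧ nestedSum strictKernel ks 1 = F}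

theorem polylogSpan_le_closure (W : ℕ) : polylogSpan W ≤ AddSubmonoid.closure (polylogs W) := by
  induction W with
  | zero => exact AddSubmonoid.closure_mono <| by rintro _ rfl; exact ⟨[], by simp [nestedSum_nil]⟩
  | succ W ih =>
    have nestedSum_mem {ks : List ℕ} {k : ℕ} (hks : ∀ l ∈ ks, 1 ≤ l) :
        nestedSum strictKernel (ks ++ [k + 1]) 1 ∈
          AddSubmonoid.closure (polylogs (ks.sum + k + 1)) :=
      AddSubmonoid.subset_closure
        ⟨_, by simpa [or_imp, forall_and] using hks, by simp [add_assoc], rfl⟩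
    refine sup_le (AddSubmonoid.map_le_iff_le_comap.mpr <| ih.trans <|
      AddSubmonoid.closure_le.mpr ?_) (AddSubmonoid.map_le_iff_le_comap.mpr <| ih.trans <|
      AddSubmonoid.closure_le.mpr ?_)
    · rintro _ ⟨ks, hks, rfl, rfl⟩
      rcases ks.eq_nil_or_concat' with rfl | ⟨ks, k, rfl⟩
      · simp [nestedSum_nil, eulerInv_one]
      · simpa [eulerInv_nestedSum_append_singleton] using
          nestedSum_mem fun l hl => hks l (List.mem_append_left _ hl)
    · rintro _ ⟨ks, hks, rfl, rfl⟩
      simpa [nestedSum_append_singleton] using nestedSum_mem (k := 0) hks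

end NestedSum

section Pairing

/-- The linear functional `F ↦ ∑ n, F_n * h n` on power series. With `h = 1` it is the evaluation at
`X = 1`. -/
noncomputable def pairing (h : ℕ → ℝ≥0∞) : ℝ≥0∞⟦X⟧ →ₗ[ℝ≥0∞] ℝ≥0∞ where
  toFun F := ∑' n, PowerSeries.coeff n F * h n
  map_add' F G := by simp [add_mul, ENNReal.tsum_add]
  map_smul' c F := by simp [mul_assoc, ENNReal.tsum_mul_left]

theorem pairing_apply (h : ℕ → ℝ≥0∞) (F : ℝ≥0∞⟦X⟧) :
    pairing h F = ∑' n, PowerSeries.coeff n F * h n := rfl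

/-- The adjoint of multiplication by `g` with respect to `pairing`. -/
noncomputable def contract (g : ℝ≥0∞⟦X⟧) (h : ℕ → ℝ≥0∞) (c : ℕ) : ℝ≥0∞ :=
  ∑' d, PowerSeries.coeff d g * h (c + d)

theorem pairing_apply_one (h : ℕ → ℝ≥0∞) : pairing h 1 = h 0 := by
  rw [pairing_apply, tsum_eq_single 0 fun n hn => by simp [PowerSeries.coeff_one, hn]]
  simp

theorem pairing_mul (h : ℕ → ℝ≥0∞) (G F : ℝ≥0∞⟦X⟧) :
    pairing h (G * F) = pairing (contract G h) F := by
  simp_rw [mul_comm G, pairing_apply, contract, PowerSeries.coeff_mul, ← ENNReal.tsum_mul_left]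
  rw [← ENNReal.tsum_prod (f := fun m v =>
      PowerSeries.coeff m F * (PowerSeries.coeff v G * h (m + v))),
    ← Finset.HasAntidiagonal.sigmaAntidiagonalEquivProd.tsum_eq, ENNReal.tsum_sigma']
  refine tsum_congr fun n => ?_
  rw [tsum_fintype, Finset.sum_mul, ← Finset.sum_coe_sort]
  refine Finset.sum_congr rfl fun p _ => ?_
  simp only [Finset.HasAntidiagonal.sigmaAntidiagonalEquivProd_apply]
  rw [Finset.HasAntidiagonal.mem_antidiagonal.mp p.2, mul_assoc]

theorem pairing_eulerInv_pow (h : ℕ → ℝ≥0∞) (k : ℕ) (F : ℝ≥0∞⟦X⟧) :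
    pairing h ((eulerInv ^ k) F) = pairing (fun n => recip n ^ k * h n) F :=
  tsum_congr fun n => by rw [coeff_eulerInv_pow, mul_comm (recip n ^ k), mul_assoc]

theorem pairing_eulerInv (h : ℕ → ℝ≥0∞) (F : ℝ≥0∞⟦X⟧) :
    pairing h (eulerInv F) = pairing (fun n => recip n * h n) F := by
  simpa only [pow_one] using pairing_eulerInv_pow h 1 F

theorem pairing_one_mul (F G : ℝ≥0∞⟦X⟧) : pairing 1 (F * G) = pairing 1 F * pairing 1 G := by
  have contract_one : contract F 1 = fun _ => pairing 1 F := rfl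
  rw [pairing_mul, contract_one, pairing_apply, ENNReal.tsum_mul_right, mul_comm]
  simp [pairing_apply]

end Pairing

section ChainSum

open scoped Relator

/-- The tuple `x` is a chain for `R` that may be preceded by `c`. -/
def IsChainFrom (R : ℕ → ℕ → Prop) (c : ℕ) {n : ℕ} (x : Fin n → ℕ) : Prop :=
  ((· < ·) ⇒ R) (Fin.cons c x : Fin (n + 1) → ℕ) (Fin.cons c x)

theorem isChainFrom_elim0 {R : ℕ → ℕ → Prop} {c : ℕ} : IsChainFrom R c Fin.elim0 :=
  fun i j hij => absurd hij (by omega)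

theorem isChainFrom_cons {R : ℕ → ℕ → Prop} [IsTrans ℕ R] {c a n : ℕ} {x : Fin n → ℕ} :
    IsChainFrom R c (Fin.cons a x : Fin (n + 1) → ℕ) ↔ R c a ∧ IsChainFrom R a x :=
  liftFun_vecCons R

theorem isChainFrom_lt {c n : ℕ} {x : Fin n → ℕ} :
    IsChainFrom (· < ·) c x ↔ (∀ i, c < x i) ∧ StrictMono x :=
  Fin.strictMono_cons

theorem isChainFrom_le {c n : ℕ} {x : Fin n → ℕ} :
    IsChainFrom (· ≤ ·) c x ↔ (∀ i, c ≤ x i) ∧ Monotone x := by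
  rw [monotone_iff_forall_lt]
  exact Fin.liftFun_cons (· ≤ ·)

/-- Summation over the `R`-successors of a number is contraction against `g`. -/
structure IsKernel (R : ℕ → ℕ → Prop) (g : ℝ≥0∞⟦X⟧) : Prop where
  le_of_rel : ∀ {a b}, R a b → a ≤ b
  coeff_of_rel : ∀ {a d}, R a (a + d) → PowerSeries.coeff d g = 1
  coeff_of_not_rel : ∀ {a d}, ¬ R a (a + d) → PowerSeries.coeff d g = 0

theorem isKernel_lt : IsKernel (· < ·) strictKernel where
  le_of_rel := le_of_lt
  coeff_of_rel h := by simp [strictKernel, (lt_add_iff_pos_right _).mp h |>.ne']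
  coeff_of_not_rel h := by
    simp [strictKernel, Nat.eq_zero_of_not_pos fun hd => h (lt_add_of_pos_right _ hd)]

theorem isKernel_le : IsKernel (· ≤ ·) weakKernel where
  le_of_rel := id
  coeff_of_rel _ := by simp [weakKernel]
  coeff_of_not_rel h := absurd le_self_add h

open Classical in
theorem IsKernel.tsum_rel {R : ℕ → ℕ → Prop} {g : ℝ≥0∞⟦X⟧} (hg : IsKernel R g) (φ : ℕ → ℝ≥0∞)
    (c : ℕ) : ∑' a, (if R c a then φ a else 0) = contract g φ c := by
  rw [← (add_right_injective c).tsum_eq]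
  · refine tsum_congr fun d => ?_
    split_ifs with h
    · rw [hg.coeff_of_rel h, one_mul]
    · rw [hg.coeff_of_not_rel h, zero_mul]
  · intro a ha
    exact ⟨a - c, Nat.add_sub_cancel' (hg.le_of_rel (of_not_not fun h => ha (if_neg h)))⟩

/-- The iterated sum over chains `c, a₁, …, aₙ` of `f₁ a₁ * ⋯ * fₙ aₙ * h aₙ` (of `h c` for the
empty chain). The relation between consecutive elements is encoded by the series `g`, as in
`IsKernel`. -/
noncomputable def chainSum (g : ℝ≥0∞⟦X⟧) :
    List (ℕ → ℝ≥0∞) → (ℕ → ℝ≥0∞) → ℕ → ℝ≥0∞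
  | [], h => h
  | f :: fs, h => contract g (f * chainSum g fs h)

open Classical in
theorem IsKernel.tsum_isChainFrom {R : ℕ → ℕ → Prop} [IsTrans ℕ R] {g : ℝ≥0∞⟦X⟧}
    (hg : IsKernel R g) {n : ℕ} (f : Fin n → ℕ → ℝ≥0∞) (h : ℕ → ℝ≥0∞) (c : ℕ) :
    (∑' x : Fin n → ℕ, if IsChainFrom R c x then
      (∏ i, f i (x i)) * h ((Fin.cons c x : Fin (n + 1) → ℕ) (Fin.last n)) else 0)
      = chainSum g (List.ofFn f) h c := by
  induction n generalizing c with
  | zero =>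
    rw [tsum_eq_single Fin.elim0 fun x hx => (hx (Subsingleton.elim _ _)).elim,
      if_pos isChainFrom_elim0]
    simp [chainSum]
  | succ n ih =>
    rw [← (Fin.consEquiv fun _ : Fin (n + 1) => ℕ).tsum_eq, ENNReal.tsum_prod', List.ofFn_succ,
      chainSum, ← hg.tsum_rel]
    refine tsum_congr fun a => ?_
    have chain_iff (x : Fin n → ℕ) :
        IsChainFrom R c (Fin.consEquiv (fun _ : Fin (n + 1) => ℕ) (a, x)) ↔
          R c a ∧ IsChainFrom R a x :=
      isChainFrom_cons
    simp only [chain_iff]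
    by_cases hca : R c a
    · rw [if_pos hca, Pi.mul_apply, ← ih, ← ENNReal.tsum_mul_left]
      refine tsum_congr fun x => ?_
      simp only [Fin.consEquiv_apply, hca, true_and, mul_ite, mul_zero, Fin.prod_univ_succ,
        Fin.cons_zero, Fin.cons_succ, ← Fin.succ_last, mul_assoc]
    · simp [hca]

theorem pairing_chainSum (g : ℝ≥0∞⟦X⟧) (ks : List ℕ) (h : ℕ → ℝ≥0∞) (F : ℝ≥0∞⟦X⟧) :
    pairing (chainSum g (ks.map fun k n => recip n ^ k) h) F = pairing h (nestedSum g ks F) := by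
  induction ks generalizing F with
  | nil => rfl
  | cons k ks ih =>
    rw [List.map_cons, chainSum, ← pairing_mul, nestedSum_cons, ← ih, pairing_eulerInv_pow]
    rfl

theorem chainSum_zero (g : ℝ≥0∞⟦X⟧) (ks : List ℕ) (h : ℕ → ℝ≥0∞) :
    chainSum g (ks.map fun k n => recip n ^ k) h 0 = pairing h (nestedSum g ks 1) := by
  rw [← pairing_chainSum, pairing_apply_one]

theorem chainSum_comp_add (g : ℝ≥0∞⟦X⟧) (fs : List (ℕ → ℝ≥0∞)) (h : ℕ → ℝ≥0∞) (M c : ℕ) :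
    chainSum g (fs.map fun f a => f (M + a)) (fun a => h (M + a)) c = chainSum g fs h (M + c) := by
  induction fs generalizing c with
  | nil => rfl
  | cons f fs ih => simp only [List.map_cons, chainSum, contract, Pi.mul_apply, ih, add_assoc]

end ChainSum

section Convergence

/-- The sequence `(n + 1) ^ (-ε)` in `[0, ∞]`. -/
noncomputable def powDecay (ε : ℝ) (n : ℕ) : ℝ≥0∞ := ((((n + 1 : ℕ) : ℝ≥0) ^ ε)⁻¹ : ℝ≥0)

theorem powDecay_ne_top (ε : ℝ) (n : ℕ) : powDecay ε n ≠ ⊤ := ENNReal.coe_ne_top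

theorem powDecay_add (ε δ : ℝ) (n : ℕ) : powDecay (ε + δ) n = powDecay ε n * powDecay δ n := by
  rw [powDecay, NNReal.rpow_add (by positivity), mul_inv, ENNReal.coe_mul, powDecay, powDecay]

theorem powDecay_antitone {ε : ℝ} (hε : 0 ≤ ε) : Antitone (powDecay ε) := fun m n hmn => by
  unfold powDecay
  gcongr

theorem tsum_powDecay_ne_top {ε : ℝ} (hε : 1 < ε) : ∑' n, powDecay ε n ≠ ⊤ := by
  have h : Summable fun n : ℕ => ((n : ℝ≥0) ^ ε)⁻¹ := NNReal.summable_rpow_inv.mpr hε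
  exact ENNReal.tsum_coe_ne_top_iff_summable.mpr ((NNReal.summable_nat_add_iff 1).mpr h)

theorem recip_le_one (n : ℕ) : recip n ≤ 1 := by
  rcases n.eq_zero_or_pos with rfl | hn
  · simp
  · exact ENNReal.coe_le_one_iff.mpr (inv_le_one_of_one_le₀ (Nat.one_le_cast.mpr hn))

theorem recip_le_two_mul_powDecay_one (n : ℕ) : recip n ≤ 2 * powDecay 1 n := by
  rcases n.eq_zero_or_pos with rfl | hn
  · simp
  · have h : (n : ℝ≥0)⁻¹ ≤ 2 * ((n + 1 : ℕ) : ℝ≥0)⁻¹ := by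
      rw [← div_eq_mul_inv, inv_le_iff_one_le_mul₀ (by positivity),
        div_mul_eq_mul_div, one_le_div (by positivity)]
      exact_mod_cast (by omega : n + 1 ≤ 2 * n)
    rw [recip, powDecay, NNReal.rpow_one]
    exact_mod_cast h

/-- Half of the decay is traded for convergence of the sum. -/
theorem contract_strictKernel_le {ε : ℝ} (hε : 0 < ε) (c : ℕ) :
    contract strictKernel (fun n => recip n * powDecay ε n) c
      ≤ (2 * ∑' n, powDecay (1 + ε / 2) n) * powDecay (ε / 2) c := by
  have term_le (d : ℕ) : recip (c + d) * powDecay ε (c + d)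
      ≤ 2 * (powDecay (1 + ε / 2) d * powDecay (ε / 2) c) := calc
    _ ≤ 2 * powDecay 1 (c + d) * powDecay ε (c + d) := by
      gcongr; exact recip_le_two_mul_powDecay_one _
    _ = 2 * (powDecay (1 + ε / 2) (c + d) * powDecay (ε / 2) (c + d)) := by
      rw [mul_assoc, ← powDecay_add, ← powDecay_add, add_assoc, add_halves]
    _ ≤ 2 * (powDecay (1 + ε / 2) d * powDecay (ε / 2) c) := by
      gcongr
      · exact powDecay_antitone (by positivity) (Nat.le_add_left d c)
      · exact powDecay_antitone (by positivity) (Nat.le_add_right c d)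
  have coeff_le_one (d : ℕ) : PowerSeries.coeff d strictKernel ≤ 1 := by
    simp only [strictKernel, PowerSeries.coeff_mk]
    split_ifs <;> simp
  rw [mul_assoc, ← ENNReal.tsum_mul_right, ← ENNReal.tsum_mul_left]
  exact ENNReal.tsum_le_tsum fun d => (mul_le_of_le_one_left' (coeff_le_one d)).trans (term_le d)

theorem pairing_le_mul {h₁ h₂ : ℕ → ℝ≥0∞} {C : ℝ≥0∞} (h : ∀ n, h₁ n ≤ C * h₂ n) (F : ℝ≥0∞⟦X⟧) :
    pairing h₁ F ≤ C * pairing h₂ F := by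
  rw [pairing_apply, pairing_apply, ← ENNReal.tsum_mul_left]
  refine ENNReal.tsum_le_tsum fun n => ?_
  rw [mul_left_comm]
  gcongr
  exact h n

theorem pairing_powDecay_ne_top {W : ℕ} {F : ℝ≥0∞⟦X⟧} (hF : F ∈ polylogSpan W) {ε : ℝ}
    (hε : 0 < ε) : pairing (powDecay ε) F ≠ ⊤ := by
  induction W generalizing F ε with
  | zero =>
    obtain ⟨n, rfl⟩ := AddSubmonoid.mem_closure_singleton.mp hF
    rw [map_nsmul, pairing_apply_one, nsmul_eq_mul]
    exact ENNReal.mul_ne_top (ENNReal.natCast_ne_top n) (powDecay_ne_top ε 0)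
  | succ W ih =>
    obtain ⟨F₀, hF₀, F₁, hF₁, rfl⟩ := mem_polylogSpan_succ.mp hF
    rw [map_add, pairing_eulerInv, pairing_eulerInv, pairing_mul]
    refine ENNReal.add_ne_top.mpr ⟨ne_top_of_le_ne_top (ENNReal.mul_ne_top ENNReal.one_ne_top
        (ih hF₀ hε)) (pairing_le_mul (fun n => ?_) F₀),
      ne_top_of_le_ne_top (ENNReal.mul_ne_top (ENNReal.mul_ne_top ENNReal.ofNat_ne_top
        (tsum_powDecay_ne_top (by linarith))) (ih hF₁ (half_pos hε)))
        (pairing_le_mul (contract_strictKernel_le hε) F₁)⟩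
    gcongr
    exact recip_le_one n

theorem pairing_one_ne_top {W : ℕ} {F : ℝ≥0∞⟦X⟧} (hF : F ∈ convergentSpan W) :
    pairing 1 F ≠ ⊤ := by
  rcases W with _ | W
  · rw [AddSubmonoid.mem_bot.mp hF, map_zero]
    exact ENNReal.zero_ne_top
  · obtain ⟨F, hF, rfl⟩ := hF
    have pairing_le : pairing 1 (eulerInv F) ≤ 2 * pairing (powDecay 1) F := by
      rw [pairing_eulerInv]
      exact pairing_le_mul (fun n => by simpa using recip_le_two_mul_powDecay_one n) F
    exact ne_top_of_le_ne_top
      (ENNReal.mul_ne_top ENNReal.ofNat_ne_top (pairing_powDecay_ne_top hF one_pos)) pairing_le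

end Convergence

section MzvSpan

theorem toReal_tsum_ite {α : Type*} (P : α → Prop) [DecidablePred P] {g : α → ℝ≥0∞}
    (hg : ∀ x, g x ≠ ⊤) :
    (∑' x, if P x then g x else 0).toReal = ∑' x : {x // P x}, (g x).toReal := by
  rw [← ENNReal.tsum_toReal_eq fun x : {x // P x} => hg x]
  congr 1
  exact ((tsum_subtype {x | P x} g).trans
    (tsum_congr fun x => by simp [Set.indicator_apply])).symm

theorem mzv_eq_toReal {r : ℕ} (k : Fin r → ℕ) :
    mzv k = (pairing 1 (nestedSum strictKernel (List.ofFn k) 1)).toReal := by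
  rw [← chainSum_zero, List.map_ofFn, ← isKernel_lt.tsum_isChainFrom]
  simp only [Function.comp_apply, Pi.one_apply, mul_one, isChainFrom_lt,
    and_comm (a := ∀ _, 0 < _)]
  rw [toReal_tsum_ite _ fun _ => ENNReal.prod_ne_top fun _ _ => recip_pow_ne_top _ _]
  refine tsum_congr fun n => ?_
  rw [ENNReal.toReal_prod]
  simp only [toReal_recip_pow, Finset.prod_inv_distrib]

/-- The additive group generated by the multiple zeta values of weight `W`. -/
noncomputable def mzvSpan (W : ℕ) : Submodule ℤ ℝ :=
  Submodule.span ℤ {x | ∃ (d : ℕ) (k : Fin (d + 1) → ℕ), (∀ j, 1 ≤ k j) ∧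
    2 ≤ k (Fin.last d) ∧ ∑ j, k j = W ∧ mzv k = x}

theorem exists_coeff_of_mem_mzvSpan {W : ℕ} {x : ℝ} (hx : x ∈ mzvSpan W) :
    ∃ (N : ℕ) (coef : Fin N → ℤ) (d : Fin N → ℕ) (ks : (i : Fin N) → Fin (d i + 1) → ℕ),
      (∀ i j, 1 ≤ ks i j) ∧ (∀ i, 2 ≤ ks i (Fin.last (d i))) ∧ (∀ i, ∑ j, ks i j = W) ∧
      x = ∑ i, (coef i : ℝ) * mzv (ks i) := by
  obtain ⟨N, coef, z, rfl⟩ := Submodule.mem_span_set'.mp hx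
  choose d ks h_one h_two h_sum h_eq using fun i => (z i).2
  exact ⟨N, coef, d, ks, h_one, h_two, h_sum, by simp [h_eq]⟩

theorem toReal_pairing_nestedSum_mem_mzvSpan {k : ℕ} {ks : List ℕ} (hk : 2 ≤ k)
    (hks : ∀ j ∈ ks, 1 ≤ j) :
    (pairing 1 (nestedSum strictKernel (ks ++ [k]) 1)).toReal ∈ mzvSpan (ks.sum + k) := by
  have ofFn_snoc : List.ofFn (Fin.snoc (α := fun _ => ℕ) ks.get k) = ks ++ [k] := by
    rw [List.ofFn_succ']
    simp only [Fin.snoc_castSucc, Fin.snoc_last, List.concat_eq_append, List.ofFn_get]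
  refine Submodule.subset_span ⟨ks.length, Fin.snoc ks.get k, ?_, by simpa using hk, ?_, ?_⟩
  · refine Fin.lastCases (by simpa using by omega) fun i => ?_
    simpa using hks _ (ks.get_mem i)
  · rw [← List.sum_ofFn, ofFn_snoc, List.sum_append, List.sum_singleton]
  · rw [mzv_eq_toReal, ofFn_snoc]

/-- The finite elements of `[0, ∞]` that are integral combinations of multiple zeta values of
weight `W`. -/
noncomputable def finiteMzvSpan (W : ℕ) : AddSubmonoid ℝ≥0∞ where
  carrier := {x | x ≠ ⊤ ∧ x.toReal ∈ mzvSpan W}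
  zero_mem' := by simp
  add_mem' {x y} hx hy := ⟨ENNReal.add_ne_top.mpr ⟨hx.1, hy.1⟩, by
    rw [ENNReal.toReal_add hx.1 hy.1]; exact add_mem hx.2 hy.2⟩

theorem mem_finiteMzvSpan_of_add {W : ℕ} {x y : ℝ≥0∞} (hxy : x + y ∈ finiteMzvSpan W)
    (hy : y ∈ finiteMzvSpan W) : x ∈ finiteMzvSpan W := by
  have hx : x ≠ ⊤ := (ENNReal.add_ne_top.mp hxy.1).1
  refine ⟨hx, ?_⟩
  have := sub_mem hxy.2 hy.2
  rwa [ENNReal.toReal_add hx hy.1, add_sub_cancel_right] at this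

theorem pairing_one_eulerInv_mem_finiteMzvSpan {W : ℕ} {F : ℝ≥0∞⟦X⟧} (hF : F ∈ polylogs W) :
    pairing 1 (eulerInv F) ∈ finiteMzvSpan (W + 1) := by
  obtain ⟨ks, hks, rfl, rfl⟩ := hF
  refine ⟨pairing_one_ne_top (W := 0 + ks.sum + 1) (eulerInv_mem_convergentSpan
    (nestedSum_mem_polylogSpan eulerInv_strictKernel_mul_mem one_mem_polylogSpan hks)), ?_⟩
  rcases ks.eq_nil_or_concat' with rfl | ⟨ks, k, rfl⟩
  · simp [nestedSum_nil, eulerInv_one]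
  · rw [eulerInv_nestedSum_append_singleton, List.sum_append, List.sum_singleton, add_assoc]
    exact toReal_pairing_nestedSum_mem_mzvSpan (Nat.succ_le_succ (hks k (by simp)))
      fun l hl => hks l (List.mem_append_left _ hl)

theorem pairing_one_mem_finiteMzvSpan {W : ℕ} {F : ℝ≥0∞⟦X⟧} (hF : F ∈ convergentSpan W) :
    pairing 1 F ∈ finiteMzvSpan W := by
  rcases W with _ | W
  · rw [AddSubmonoid.mem_bot.mp hF, map_zero]
    exact zero_mem _
  · obtain ⟨F, hF, rfl⟩ := hF
    have closure_le : AddSubmonoid.closure (polylogs W) ≤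
        (finiteMzvSpan (W + 1)).comap (pairing 1 ∘ₗ eulerInv) :=
      AddSubmonoid.closure_le.mpr fun _ => pairing_one_eulerInv_mem_finiteMzvSpan
    exact closure_le (polylogSpan_le_closure W hF)

theorem mzv_mul_mzv_mem_mzvSpan {d e V W : ℕ} {k : Fin (d + 1) → ℕ} {l : Fin (e + 1) → ℕ}
    (hk : IsAdmissible (List.ofFn k)) (hl : IsAdmissible (List.ofFn l)) (hkV : ∑ i, k i = V)
    (hlW : ∑ i, l i = W) : mzv k * mzv l ∈ mzvSpan (V + W) := by
  have polylog_mem {d V : ℕ} {k : Fin (d + 1) → ℕ} (hk : IsAdmissible (List.ofFn k))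
      (hkV : ∑ i, k i = V) : nestedSum strictKernel (List.ofFn k) 1 ∈ convergentSpan V := by
    rw [← hkV, ← List.sum_ofFn, ← zero_add (List.sum _)]
    exact nestedSum_mem_convergentSpan eulerInv_strictKernel_mul_mem one_mem_polylogSpan hk
      (by simp)
  rw [mzv_eq_toReal, mzv_eq_toReal, ← ENNReal.toReal_mul, ← pairing_one_mul]
  exact (pairing_one_mem_finiteMzvSpan
    (mul_mem_convergentSpan (polylog_mem hk hkV) (polylog_mem hl hlW))).2

theorem mul_mem_mzvSpan {V W : ℕ} {x y : ℝ} (hx : x ∈ mzvSpan V) (hy : y ∈ mzvSpan W) :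
    x * y ∈ mzvSpan (V + W) := by
  have mul_le : mzvSpan V * mzvSpan W ≤ mzvSpan (V + W) := by
    rw [mzvSpan, mzvSpan, Submodule.span_mul_span, Submodule.span_le]
    rintro _ ⟨_, ⟨d, k, hk_one, hk_two, hkV, rfl⟩, _, ⟨e, l, hl_one, hl_two, hlW, rfl⟩, rfl⟩
    exact mzv_mul_mzv_mem_mzvSpan (isAdmissible_ofFn hk_one fun _ => hk_two)
      (isAdmissible_ofFn hl_one fun _ => hl_two) hkV hlW
  exact mul_le (Submodule.mul_mem_mul hx hy)

theorem mul_mem_finiteMzvSpan {V W : ℕ} {x y : ℝ≥0∞} (hx : x ∈ finiteMzvSpan V)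
    (hy : y ∈ finiteMzvSpan W) : x * y ∈ finiteMzvSpan (V + W) :=
  ⟨ENNReal.mul_ne_top hx.1 hy.1, by
    rw [ENNReal.toReal_mul]; exact mul_mem_mzvSpan hx.2 hy.2⟩

end MzvSpan

section Row

theorem coeff_strictKernel_mul (F : ℝ≥0∞⟦X⟧) (v : ℕ) :
    PowerSeries.coeff v (strictKernel * F) = ∑ b ∈ Finset.range v, PowerSeries.coeff b F := by
  rw [mul_comm, PowerSeries.coeff_mul, Finset.Nat.sum_antidiagonal_eq_sum_range_succ_mk,
    Finset.sum_range_succ]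
  simp only [Nat.sub_self, PowerSeries.coeff_zero_eq_constantCoeff, constantCoeff_strictKernel,
    mul_zero, add_zero]
  refine Finset.sum_congr rfl fun b hb => ?_
  simp [strictKernel, Nat.sub_ne_zero_of_lt (Finset.mem_range.mp hb)]

theorem contract_weakKernel_add_sum (φ : ℕ → ℝ≥0∞) (v : ℕ) :
    contract weakKernel φ v + ∑ b ∈ Finset.range v, φ b = contract weakKernel φ 0 := by
  simp only [contract, weakKernel, PowerSeries.coeff_mk, Pi.one_apply, one_mul, zero_add,
    add_comm v]
  rw [add_comm]
  exact Summable.sum_add_tsum_nat_add' ENNReal.summable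

/-- The generating series, in the corner entry `v`, of the sums over rows `v ≤ b₁ ≤ ⋯ ≤ bₙ` with
exponents `es`. -/
noncomputable def rowSeries (es : List ℕ) : ℝ≥0∞⟦X⟧ :=
  PowerSeries.mk fun v => PowerSeries.coeff v strictKernel *
    chainSum weakKernel (es.map fun k n => recip n ^ k) 1 v

theorem coeff_rowSeries (es : List ℕ) (v : ℕ) :
    PowerSeries.coeff v (rowSeries es) = PowerSeries.coeff v strictKernel *
      chainSum weakKernel (es.map fun k n => recip n ^ k) 1 v :=
  PowerSeries.coeff_mk _ _

theorem rowSeries_nil : rowSeries [] = strictKernel := by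
  ext v
  simp [coeff_rowSeries, chainSum]

/-- The rows with `v ≤ b₁` and those with `b₁ < v` together make up all rows. -/
theorem rowSeries_cons_add {e : ℕ} (he : 1 ≤ e) (es : List ℕ) :
    rowSeries (e :: es) + strictKernel * (eulerInv ^ e) (rowSeries es)
      = pairing 1 (nestedSum weakKernel (e :: es) 1) • strictKernel := by
  ext v
  have coeff_eq (b : ℕ) : PowerSeries.coeff b ((eulerInv ^ e) (rowSeries es))
      = recip b ^ e * chainSum weakKernel (es.map fun k n => recip n ^ k) 1 b := by
    rw [coeff_eulerInv_pow, coeff_rowSeries]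
    rcases eq_or_ne b 0 with rfl | hb
    · simp [Nat.one_le_iff_ne_zero.mp he]
    · simp [strictKernel, hb]
  rw [map_add, coeff_rowSeries, coeff_strictKernel_mul, map_smul, smul_eq_mul, ← chainSum_zero,
    List.map_cons, chainSum]
  simp only [coeff_eq]
  rcases eq_or_ne v 0 with rfl | hv
  · simp [constantCoeff_strictKernel]
  · have coeff_one : PowerSeries.coeff v strictKernel = 1 := by simp [strictKernel, hv]
    rw [coeff_one, one_mul, mul_one]
    exact contract_weakKernel_add_sum _ v

theorem linearMap_rowSeries_mem_finiteMzvSpan {es : List ℕ} (hes : IsAdmissible es) {c : ℕ}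
    {Φ : ℝ≥0∞⟦X⟧ →ₗ[ℝ≥0∞] ℝ≥0∞} (hΦ : ∀ {W B}, B ∈ polylogSpan W →
      Φ (strictKernel * B) ∈ finiteMzvSpan (c + W)) :
    Φ (rowSeries es) ∈ finiteMzvSpan (c + es.sum) := by
  induction es generalizing Φ c with
  | nil => simpa [rowSeries_nil] using hΦ one_mem_polylogSpan
  | cons e es ih =>
    have he : 1 ≤ e := hes.one_le e List.mem_cons_self
    have total_mem :
        pairing 1 (nestedSum weakKernel (e :: es) 1) ∈ finiteMzvSpan (e :: es).sum := by
      simpa only [zero_add] using pairing_one_mem_finiteMzvSpan (nestedSum_mem_convergentSpan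
        eulerInv_weakKernel_mul_mem one_mem_polylogSpan hes (List.cons_ne_nil e es))
    have corner_mem : Φ strictKernel ∈ finiteMzvSpan c := by
      simpa using hΦ one_mem_polylogSpan
    have complement_mem : Φ (strictKernel * (eulerInv ^ e) (rowSeries es))
        ∈ finiteMzvSpan (c + e + es.sum) := by
      refine ih hes.tail (Φ := Φ ∘ₗ LinearMap.mulLeft ℝ≥0∞ strictKernel ∘ₗ eulerInv ^ e)
        fun {W B} hB => ?_
      rw [add_right_comm, add_assoc]
      exact hΦ (eulerInv_pow_mul_mem eulerInv_strictKernel_mul_mem hB he)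
    refine mem_finiteMzvSpan_of_add (y := Φ (strictKernel * (eulerInv ^ e) (rowSeries es))) ?_ ?_
    · rw [← map_add, rowSeries_cons_add he, map_smul, smul_eq_mul, add_comm]
      exact mul_mem_finiteMzvSpan total_mem corner_mem
    · simpa only [List.sum_cons, add_assoc] using complement_mem

end Row

section Hook

open Classical in
/-- The row sum is absorbed into the corner factor of the column. -/
theorem tsum_column {r : ℕ} (kc : Fin (r + 1) → ℕ) (es : List ℕ) (M : ℕ) :
    (∑' v : Fin (r + 1) → ℕ, if IsChainFrom (· < ·) 0 v then
      (∏ i, recip (M + v i) ^ kc i) * chainSum weakKernel (es.map fun k n => recip n ^ k) 1 (v 0)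
      else 0)
    = contract (rowSeries es) (fun u => recip u ^ kc 0 *
        chainSum strictKernel ((List.ofFn (Fin.tail kc)).map fun k n => recip n ^ k) 1 u) M := by
  set T := chainSum weakKernel (es.map fun k n => recip n ^ k) 1
  have shifted_column (v : ℕ) :
      chainSum strictKernel (List.ofFn fun (i : Fin r) a => recip (M + a) ^ kc i.succ) 1 v
      = chainSum strictKernel ((List.ofFn (Fin.tail kc)).map fun k n => recip n ^ k) 1 (M + v) := by
    rw [← chainSum_comp_add, List.map_map, List.map_ofFn]
    rfl
  have column_sum := isKernel_lt.tsum_isChainFrom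
    (Fin.cons (fun a => T a * recip (M + a) ^ kc 0) fun i a => recip (M + a) ^ kc i.succ :
      Fin (r + 1) → ℕ → ℝ≥0∞) 1 0
  simp only [Fin.prod_univ_succ, Fin.cons_zero, Fin.cons_succ, Pi.one_apply, mul_one,
    List.ofFn_succ, chainSum] at column_sum
  simp only [Fin.prod_univ_succ, mul_comm _ (T _), ← mul_assoc]
  refine column_sum.trans (tsum_congr fun v => ?_)
  rw [coeff_rowSeries, Pi.mul_apply, zero_add, shifted_column, mul_assoc, mul_assoc]

open Classical in
theorem tsum_chain_mul_last {s : ℕ} (t : Fin (s + 1) → ℕ) (h : ℕ → ℝ≥0∞) :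
    (∑' m : Fin (s + 1) → ℕ, if IsChainFrom (· < ·) 0 m then
      (∏ i, recip (m i) ^ t i) * h (m (Fin.last s)) else 0)
    = pairing h (nestedSum strictKernel (List.ofFn t) 1) := by
  rw [← chainSum_zero, List.map_ofFn, ← isKernel_lt.tsum_isChainFrom]
  refine tsum_congr fun m => ?_
  rw [← Fin.succ_last, Fin.cons_succ]
  rfl

open Classical in
theorem tsum_row {n : ℕ} (kr : Fin n → ℕ) (c : ℕ) :
    (∑' b : Fin n → ℕ, if IsChainFrom (· ≤ ·) c b then ∏ j, recip (b j) ^ kr j else 0)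
    = chainSum weakKernel ((List.ofFn kr).map fun k n => recip n ^ k) 1 c := by
  rw [List.map_ofFn, ← isKernel_le.tsum_isChainFrom]
  simp only [Function.comp_apply, Pi.one_apply, mul_one]

open Classical in
theorem efHook_eq_toReal_tsum {s n r : ℕ} (t : Fin (s + 1) → ℕ) (kr : Fin n → ℕ)
    (kc : Fin (r + 1) → ℕ) :
    efHook (s + 1) n (r + 1) s.succ_pos r.succ_pos t kr kc =
      (∑' x : (Fin (s + 1) → ℕ) × (Fin (r + 1) → ℕ) × (Fin n → ℕ),
        if IsChainFrom (· < ·) 0 x.1 ∧ IsChainFrom (· < ·) 0 x.2.1 ∧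
          IsChainFrom (· ≤ ·) (x.2.1 0) x.2.2
        then (∏ i, recip (x.1 i) ^ t i) * (∏ j, recip (x.2.2 j) ^ kr j)
          * ∏ i, recip (x.1 (Fin.last s) + x.2.1 i) ^ kc i
        else 0).toReal := by
  have chain_iff (x : (Fin (s + 1) → ℕ) × (Fin (r + 1) → ℕ) × (Fin n → ℕ)) :
      IsChainFrom (· < ·) 0 x.1 ∧ IsChainFrom (· < ·) 0 x.2.1 ∧
        IsChainFrom (· ≤ ·) (x.2.1 0) x.2.2 ↔
      StrictMono x.1 ∧ (∀ i, 0 < x.1 i) ∧ StrictMono x.2.1 ∧ 0 < x.2.1 ⟨0, r.succ_pos⟩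
        ∧ Monotone x.2.2 ∧ ∀ j, x.2.1 ⟨0, r.succ_pos⟩ ≤ x.2.2 j := by
    rw [isChainFrom_lt, isChainFrom_lt, isChainFrom_le]
    constructor
    · rintro ⟨⟨hm_pos, hm⟩, ⟨hv_pos, hv⟩, hb_le, hb⟩
      exact ⟨hm, hm_pos, hv, hv_pos 0, hb, hb_le⟩
    · rintro ⟨hm, hm_pos, hv, hv_pos, hb, hb_le⟩
      exact ⟨⟨hm_pos, hm⟩, ⟨fun i => hv_pos.trans_le (hv.monotone (Fin.zero_le i)), hv⟩, hb_le, hb⟩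
  simp only [chain_iff]
  rw [toReal_tsum_ite _ fun _ => ENNReal.mul_ne_top (ENNReal.mul_ne_top
    (ENNReal.prod_ne_top fun _ _ => recip_pow_ne_top _ _)
    (ENNReal.prod_ne_top fun _ _ => recip_pow_ne_top _ _))
    (ENNReal.prod_ne_top fun _ _ => recip_pow_ne_top _ _)]
  refine tsum_congr fun x => ?_
  simp only [ENNReal.toReal_mul, ENNReal.toReal_prod, toReal_recip_pow, Finset.prod_inv_distrib]
  rfl

open Classical in
theorem efHook_eq_toReal {s n r : ℕ} (t : Fin (s + 1) → ℕ) (kr : Fin n → ℕ)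
    (kc : Fin (r + 1) → ℕ) :
    efHook (s + 1) n (r + 1) s.succ_pos r.succ_pos t kr kc =
      (pairing 1 (nestedSum strictKernel (List.ofFn (Fin.tail kc)) ((eulerInv ^ kc 0)
        (rowSeries (List.ofFn kr) * nestedSum strictKernel (List.ofFn t) 1)))).toReal := by
  rw [efHook_eq_toReal_tsum, ← pairing_chainSum, pairing_eulerInv_pow, pairing_mul,
    ← tsum_chain_mul_last, ENNReal.tsum_prod']
  congr 1
  refine tsum_congr fun m => ?_
  by_cases hm : IsChainFrom (· < ·) 0 m
  swap
  · simp [hm]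
  rw [if_pos hm, ← tsum_column, ENNReal.tsum_prod', ← ENNReal.tsum_mul_left]
  refine tsum_congr fun v => ?_
  by_cases hv : IsChainFrom (· < ·) 0 v
  swap
  · simp [hv]
  rw [if_pos hv, ← tsum_row, ← ENNReal.tsum_mul_left, ← ENNReal.tsum_mul_left]
  refine tsum_congr fun b => ?_
  simp only [hm, hv, true_and, mul_ite, mul_zero]
  congr 1
  ring

end Hook

theorem efHook_mem_mzv_span_general (s n r : ℕ) (hs : 0 < s) (hr : 0 < r)
    (t : Fin s → ℕ) (kr : Fin n → ℕ) (kc : Fin r → ℕ) (ht : ∀ i, 1 ≤ t i)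
    (hkr : ∀ j, 1 ≤ kr j) (hkrl : ∀ h : 0 < n, 2 ≤ kr ⟨n - 1, by omega⟩)
    (hkc : ∀ i, 1 ≤ kc i) (hkcl : 2 ≤ kc ⟨r - 1, by omega⟩) :
    efHook s n r hs hr t kr kc ∈ mzvSpan ((∑ i, t i) + (∑ j, kr j) + ∑ i, kc i) := by
  obtain ⟨s, rfl⟩ := Nat.exists_eq_add_one_of_ne_zero hs.ne'
  obtain ⟨r, rfl⟩ := Nat.exists_eq_add_one_of_ne_zero hr.ne'
  set F := nestedSum strictKernel (List.ofFn t) 1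
  have hF : F ∈ polylogSpan (∑ i, t i) := by
    rw [← List.sum_ofFn, ← zero_add (List.sum _)]
    exact nestedSum_mem_polylogSpan eulerInv_strictKernel_mul_mem one_mem_polylogSpan
      (List.forall_mem_ofFn_iff.mpr ht)
  let Φ := pairing 1 ∘ₗ nestedSum strictKernel (List.ofFn (Fin.tail kc)) ∘ₗ
    (eulerInv ^ kc 0) ∘ₗ LinearMap.mulRight ℝ≥0∞ F
  have hΦ {W B} (hB : B ∈ polylogSpan W) :
      Φ (strictKernel * B) ∈ finiteMzvSpan ((∑ i, t i) + (∑ i, kc i) + W) := by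
    have h := pairing_one_mem_finiteMzvSpan (nestedSum_mem_convergentSpan
      eulerInv_strictKernel_mul_mem (mul_mem_polylogSpan hB hF)
      (isAdmissible_ofFn hkc fun _ => hkcl) (by simp))
    rw [List.sum_ofFn, add_assoc, add_comm, List.ofFn_succ, nestedSum_cons, ← mul_assoc] at h
    exact h
  rw [efHook_eq_toReal, add_right_comm, ← List.sum_ofFn (f := kr)]
  exact (linearMap_rowSeries_mem_finiteMzvSpan (isAdmissible_ofFn hkr hkrl) hΦ).2

/-- Every elementary factorial Schur multiple zeta value of hook type (positive integer
exponents, corner and final exponents ≥ 2) is a ℤ-linear combination of multiple zeta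
values of the same weight. -/
theorem efHook_mem_mzv_span (s n r : ℕ) (hs : 0 < s) (hr : 0 < r)
    (t : Fin s → ℕ) (kr : Fin n → ℕ) (kc : Fin r → ℕ)
    (ht : ∀ i, 1 ≤ t i) (htl : 2 ≤ t ⟨s - 1, by omega⟩)
    (hkr : ∀ j, 1 ≤ kr j) (hkrl : ∀ h : 0 < n, 2 ≤ kr ⟨n - 1, by omega⟩)
    (hkc : ∀ i, 1 ≤ kc i) (hkcl : 2 ≤ kc ⟨r - 1, by omega⟩) :
    ∃ (N : ℕ) (coef : Fin N → ℤ) (d : Fin N → ℕ) (ks : (i : Fin N) → Fin (d i + 1) → ℕ),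
      (∀ i j, 1 ≤ ks i j) ∧ (∀ i, 2 ≤ ks i (Fin.last (d i)))
      ∧ (∀ i, (∑ j, ks i j) = (∑ i, t i) + (∑ j, kr j) + ∑ i, kc i)
      ∧ efHook s n r hs hr t kr kc = ∑ i, (coef i : ℝ) * mzv (ks i) := by
  exact exists_coeff_of_mem_mzvSpan
    (efHook_mem_mzv_span_general s n r hs hr t kr kc ht hkr hkrl hkc hkcl)
end
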